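/- Let a : ℕ → ℝ have finite range and let v : ℕ → V have finite range. For each k ≥ 1 let M_k = max{a(ℓ) : 1 ≤ ℓ ≤ k}, let I_k = {ℓ ≤ k : a(ℓ) = M_k}, and for j = 1,…,|I_k| let ι_k(j) denote the j-th smallest element of I_k. Let S : ℕ → Set(ℕ) satisfy S(m) ⊆ {1,…,m} and S(m) ⊆ S(m+1) for every m ≥ 1. Then the selected value sets T_k = {v(ι_k(j)) : j ∈ S(|I_k|)} are eventually constant: there exists k₀ such that T_k = T_{k₀} for every k ≥ k₀. -/

import Mathlib

/-- The running maximum `M_k = max {a ℓ : 1 ≤ ℓ ≤ k}` of the first `k`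
terms of the sequence `a` (for `k ≥ 1` the set is finite and nonempty,
so it coincides with `sSup`). -/
noncomputable def runningMax (a : ℕ → ℝ) (k : ℕ) : ℝ :=
  sSup (a '' Set.Icc 1 k)

open Classical in
/-- The set `I_k` of maximizing indices among the first `k` terms, as a
finset. -/
noncomputable def argmaxFinset (a : ℕ → ℝ) (k : ℕ) : Finset ℕ :=
  (Finset.Icc 1 k).filter (fun ℓ => a ℓ = runningMax a k)

/-- `ι_k(j)`: the `j`-th smallest element of `I_k` (with `j` 1-indexed,
junk value `0` if `j` is out of range). -/
noncomputable def nthArgmax (a : ℕ → ℝ) (k j : ℕ) : ℕ :=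
  ((argmaxFinset a k).sort (· ≤ ·)).getD (j - 1) 0

/-- The set `T_k = {v(ι_k(j)) : j ∈ S(|I_k|)}` of values selected by the
selectors `S` from the maximizing indices at iteration `k`. -/
def selectedValues {V : Type*} (a : ℕ → ℝ) (v : ℕ → V) (S : ℕ → Set ℕ)
    (k : ℕ) : Set V :=
  (fun j => v (nthArgmax a k j)) '' S (argmaxFinset a k).card

/-!
Once `a` has attained its maximum over the indices `≥ 1`, the running maximum is constant, and the
set `I_k` only grows by larger indices. Hence `ι_k(j)` does not depend on `k` once it is defined,
and nestedness of the selectors makes `T_k` increase with `k`. All `T_k` are subsets of one finite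
set, so this increasing sequence stabilizes.
-/

section Order

theorem exists_isMaxOn_of_finite_image {ι α : Type*} [LinearOrder α] {f : ι → α} {s : Set ι}
    (hfin : (f '' s).Finite) (hs : s.Nonempty) : ∃ i ∈ s, IsMaxOn f s i := by
  obtain ⟨i, hi⟩ := hfin.exists_maximalFor' f s hs
  exact ⟨i, hi.prop, fun j hj => (le_total (f j) (f i)).elim id (hi.le_of_le hj)⟩

theorem exists_forall_ge_eq_of_monotoneOn_Ici {ι α : Type*} [Preorder ι] [PartialOrder α]
    {f : ι → α} {i₀ : ι} (hmono : MonotoneOn f (Set.Ici i₀))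
    (hfin : (f '' Set.Ici i₀).Finite) : ∃ i, ∀ j, i ≤ j → f j = f i := by
  obtain ⟨i, hi⟩ := hfin.exists_maximalFor' f (Set.Ici i₀) Set.nonempty_Ici
  refine ⟨i, fun j hij => ?_⟩
  have hj : j ∈ Set.Ici i₀ := le_trans hi.prop hij
  have hle : f i ≤ f j := hmono hi.prop hj hij
  exact (hi.le_of_le hj hle).antisymm hle

theorem sort_union_of_forall_lt {α : Type*} [LinearOrder α] {s t : Finset α}
    (hlt : ∀ x ∈ s, ∀ y ∈ t, x < y) : (s ∪ t).sort = s.sort ++ t.sort := by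
  have hsorted : (s.sort ++ t.sort).SortedLT :=
    (List.pairwise_append.2 ⟨s.sortedLT_sort.pairwise, t.sortedLT_sort.pairwise,
      fun x hx y hy => hlt x ((Finset.mem_sort _).1 hx) y ((Finset.mem_sort _).1 hy)⟩).sortedLT
  have hunion : (s.sort ++ t.sort).toFinset = s ∪ t := by
    rw [List.toFinset_append, Finset.sort_toFinset, Finset.sort_toFinset]
  rw [← hunion]
  exact (List.toFinset_sort _ hsorted.nodup).2 hsorted.sortedLE.pairwise

end Order

section Argmax

variable {a : ℕ → ℝ} {k l : ℕ}

theorem mem_argmaxFinset {ℓ : ℕ} :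
    ℓ ∈ argmaxFinset a k ↔ ℓ ∈ Set.Icc 1 k ∧ a ℓ = runningMax a k := by
  simp only [argmaxFinset, Finset.mem_filter, Finset.mem_Icc, Set.mem_Icc]

theorem runningMax_eq_of_isMaxOn {i : ℕ} (hi : i ∈ Set.Icc 1 k)
    (hmax : IsMaxOn a (Set.Icc 1 k) i) : runningMax a k = a i :=
  IsGreatest.csSup_eq ⟨Set.mem_image_of_mem a hi, Set.forall_mem_image.2 hmax⟩

theorem argmaxFinset_subset_of_runningMax_eq (hkl : k ≤ l)
    (hM : runningMax a l = runningMax a k) : argmaxFinset a k ⊆ argmaxFinset a l := by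
  intro i hi
  obtain ⟨hik, hai⟩ := mem_argmaxFinset.1 hi
  exact mem_argmaxFinset.2 ⟨Set.Icc_subset_Icc_right hkl hik, hai.trans hM.symm⟩

theorem sort_argmaxFinset_isPrefix_of_runningMax_eq (hkl : k ≤ l)
    (hM : runningMax a l = runningMax a k) :
    (argmaxFinset a k).sort <+: (argmaxFinset a l).sort := by
  have hnew : ∀ i ∈ argmaxFinset a k, ∀ i' ∈ argmaxFinset a l \ argmaxFinset a k, i < i' := by
    intro i hi i' hi'
    obtain ⟨hmem, hnotMem⟩ := Finset.mem_sdiff.1 hi'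
    obtain ⟨hi'l, hai'⟩ := mem_argmaxFinset.1 hmem
    have hki' : k < i' := by
      by_contra! hi'k
      exact hnotMem (mem_argmaxFinset.2 ⟨⟨hi'l.1, hi'k⟩, hai'.trans hM⟩)
    exact (mem_argmaxFinset.1 hi).1.2.trans_lt hki'
  rw [← Finset.union_sdiff_of_subset (argmaxFinset_subset_of_runningMax_eq hkl hM),
    sort_union_of_forall_lt hnew]
  exact List.prefix_append _ _

theorem pred_lt_length_sort_argmaxFinset {j : ℕ} (hj : j ∈ Set.Icc 1 (argmaxFinset a k).card) :
    j - 1 < (argmaxFinset a k).sort.length := by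
  rw [Finset.length_sort]
  exact Nat.sub_one_lt_of_le hj.1 hj.2

theorem nthArgmax_mem {j : ℕ} (hj : j ∈ Set.Icc 1 (argmaxFinset a k).card) :
    nthArgmax a k j ∈ argmaxFinset a k := by
  rw [nthArgmax, List.getD_eq_getElem _ _ (pred_lt_length_sort_argmaxFinset hj)]
  exact (Finset.mem_sort _).1 (List.getElem_mem _)

theorem nthArgmax_eq_of_runningMax_eq (hkl : k ≤ l) (hM : runningMax a l = runningMax a k)
    {j : ℕ} (hj : j ∈ Set.Icc 1 (argmaxFinset a k).card) :
    nthArgmax a l j = nthArgmax a k j := by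
  obtain ⟨newIndices, hsort⟩ := sort_argmaxFinset_isPrefix_of_runningMax_eq hkl hM
  rw [nthArgmax, nthArgmax, ← hsort,
    List.getD_append _ _ _ _ (pred_lt_length_sort_argmaxFinset hj)]

end Argmax

section SelectedValues

variable {V : Type*} {a : ℕ → ℝ} (v : ℕ → V) {S : ℕ → Set ℕ} {k l : ℕ}

theorem selectedValues_subset_image_argmaxFinset
    (hS : S (argmaxFinset a k).card ⊆ Set.Icc 1 (argmaxFinset a k).card) :
    selectedValues a v S k ⊆ v '' argmaxFinset a k :=
  Set.image_subset_iff.2 fun _ hj => Set.mem_image_of_mem v (nthArgmax_mem (hS hj))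

theorem selectedValues_subset_of_runningMax_eq (hkl : k ≤ l)
    (hM : runningMax a l = runningMax a k)
    (hS : S (argmaxFinset a k).card ⊆ Set.Icc 1 (argmaxFinset a k).card)
    (hSkl : S (argmaxFinset a k).card ⊆ S (argmaxFinset a l).card) :
    selectedValues a v S k ⊆ selectedValues a v S l := by
  rintro _ ⟨j, hj, rfl⟩
  exact ⟨j, hSkl hj, congrArg v (nthArgmax_eq_of_runningMax_eq hkl hM (hS hj))⟩

end SelectedValues

theorem selectedValues_eventually_constant_general {V : Type*}
    {a : ℕ → ℝ} {k₁ : ℕ} (hk₁ : 1 ≤ k₁) (hmax : IsMaxOn a (Set.Ici 1) k₁)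
    {v : ℕ → V} (hvfin : (v '' {ℓ ∈ Set.Ici 1 | a ℓ = a k₁}).Finite)
    {S : ℕ → Set ℕ}
    (hS1 : ∀ m : ℕ, 1 ≤ m → S m ⊆ Set.Icc 1 m)
    (hS2 : ∀ m : ℕ, 1 ≤ m → S m ⊆ S (m + 1)) :
    ∃ k₀ : ℕ, ∀ k : ℕ, k₀ ≤ k →
      selectedValues a v S k = selectedValues a v S k₀ := by
  have hM : ∀ k ≥ k₁, runningMax a k = a k₁ := fun k hk =>
    runningMax_eq_of_isMaxOn ⟨hk₁, hk⟩ (hmax.on_subset Set.Icc_subset_Ici_self)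
  have hcard : ∀ k ≥ k₁, 1 ≤ (argmaxFinset a k).card := fun k hk =>
    Finset.card_pos.2 ⟨k₁, mem_argmaxFinset.2 ⟨⟨hk₁, hk⟩, (hM k hk).symm⟩⟩
  have hSmono : MonotoneOn S (Set.Ici 1) := monotoneOn_nat_Ici_of_le_succ hS2
  refine exists_forall_ge_eq_of_monotoneOn_Ici (i₀ := k₁) ?_ (hvfin.finite_subsets.subset ?_)
  · intro k hk l hl hkl
    have hMkl : runningMax a l = runningMax a k := (hM l hl).trans (hM k hk).symm
    exact selectedValues_subset_of_runningMax_eq v hkl hMkl (hS1 _ (hcard k hk))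
      (hSmono (hcard k hk) (hcard l hl)
        (Finset.card_le_card (argmaxFinset_subset_of_runningMax_eq hkl hMkl)))
  · rintro _ ⟨k, hk, rfl⟩
    refine (selectedValues_subset_image_argmaxFinset v (hS1 _ (hcard k hk))).trans
      (Set.image_mono fun i hi => ?_)
    obtain ⟨hik, hai⟩ := mem_argmaxFinset.1 hi
    exact ⟨hik.1, hai.trans (hM k hk)⟩

/-- If the cut values `a` and the cut coefficients `v` take only finitely
many distinct values, then under Assumption (H3) on the selectors
(`S m ⊆ {1,…,m}` and `S m ⊆ S (m+1)`), the sets of selected values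
`T_k` are eventually constant. -/
theorem selectedValues_eventually_constant {V : Type*}
    (a : ℕ → ℝ) (hafin : (Set.range a).Finite)
    (v : ℕ → V) (hvfin : (Set.range v).Finite)
    (S : ℕ → Set ℕ)
    (hS1 : ∀ m : ℕ, 1 ≤ m → S m ⊆ Set.Icc 1 m)
    (hS2 : ∀ m : ℕ, 1 ≤ m → S m ⊆ S (m + 1)) :
    ∃ k₀ : ℕ, ∀ k : ℕ, k₀ ≤ k →
      selectedValues a v S k = selectedValues a v S k₀ := by
  obtain ⟨k₁, hk₁, hmax⟩ := exists_isMaxOn_of_finite_image (s := Set.Ici 1)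
    (hafin.subset (Set.image_subset_range a _)) Set.nonempty_Ici
  exact selectedValues_eventually_constant_general hk₁ hmax
    (hvfin.subset (Set.image_subset_range v _)) hS1 hS2
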